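/- Let μ ∈ ℂ with μ ∉ M/2 + ℤ, let ν ∈ ℤ with ν ≡ M (mod 2), and let z_1,…,z_n be pairwise distinct nonzero complex numbers. Then for every s = 1,…,n and every v ∈ V[ν]: A(μ + ν/2 − 1)·K_s(z,μ)·v = K_s(z,−μ)·A(μ + ν/2 − 1)·v. -/

import Mathlib

open Complex Finset

namespace Paper

noncomputable section

variable {n : ℕ}

/-- The index set of the natural basis of `V = V_{m 0} ⊗ ⋯ ⊗ V_{m (n-1)}`:
the basis vector `v_{i_1} ⊗ ⋯ ⊗ v_{i_n}` corresponds to the index `(i_1,…,i_n)`. -/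
abbrev Idx (m : Fin n → ℕ) := ∀ s : Fin n, Fin (m s + 1)

/-- The tensor product `V = V_{m 0} ⊗ ⋯ ⊗ V_{m (n-1)}` realized concretely as the space of
ℂ-valued functions on the index set of its natural basis. -/
abbrev TV (m : Fin n → ℕ) := Idx m → ℂ

/-- The linear operator `f ↦ (i ↦ c i * f (g i))`; all the basic operators below are of
this form. -/
def mulShift {ι : Type*} (c : ι → ℂ) (g : ι → ι) : Module.End ℂ (ι → ℂ) where
  toFun f i := c i * f (g i)
  map_add' f h := by funext i; simp [mul_add]
  map_smul' a f := by
    funext i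
    simp only [Pi.smul_apply, smul_eq_mul, RingHom.id_apply]
    ring

variable (m : Fin n → ℕ)

/-- `e11` acting in the `s`-th tensor factor: `e11 · v_k = ((m-2k)/2) v_k`. -/
def E11 (s : Fin n) : Module.End ℂ (TV m) :=
  mulShift (fun idx => ((m s : ℂ) - 2 * ((idx s : ℕ) : ℂ)) / 2) id

/-- `e22` acting in the `s`-th tensor factor: `e22 · v_k = -((m-2k)/2) v_k`. -/
def E22 (s : Fin n) : Module.End ℂ (TV m) :=
  mulShift (fun idx => -(((m s : ℂ) - 2 * ((idx s : ℕ) : ℂ)) / 2)) id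

/-- `e21` acting in the `s`-th tensor factor: `e21 · v_k = (k+1) v_{k+1}`. -/
def E21 (s : Fin n) : Module.End ℂ (TV m) :=
  mulShift (fun idx => ((idx s : ℕ) : ℂ)) (fun idx => Function.update idx s (idx s - 1))

/-- `e12` acting in the `s`-th tensor factor: `e12 · v_k = (m-k+1) v_{k-1}`. -/
def E12 (s : Fin n) : Module.End ℂ (TV m) :=
  mulShift (fun idx => (m s : ℂ) - ((idx s : ℕ) : ℂ)) (fun idx => Function.update idx s (idx s + 1))

/-- The diagonal action `e11 = Σ_s e11^{(s)}` on the tensor product. -/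
def e11T : Module.End ℂ (TV m) := ∑ s, E11 m s
def e22T : Module.End ℂ (TV m) := ∑ s, E22 m s
def e21T : Module.End ℂ (TV m) := ∑ s, E21 m s
def e12T : Module.End ℂ (TV m) := ∑ s, E12 m s

/-- `v ∈ V[ν]`, i.e. `(e11 - e22) v = ν v`. -/
def inWt (ν : ℤ) (v : TV m) : Prop := (e11T m - e22T m) v = ((ν : ℤ) : ℂ) • v

/-- The Weyl involution `σ`, acting by `σ v_k = (-1)^k v_{m-k}` in each factor. -/
def sigmaOp : Module.End ℂ (TV m) :=
  mulShift (fun idx => ∏ s, (-1 : ℂ) ^ (m s - (idx s : ℕ))) (fun idx s => (idx s).rev)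

/-- The weight of a basis vector: `wt(i) = Σ_s (m_s - 2 i_s)`. -/
def wt (idx : Idx m) : ℤ := ∑ s, ((m s : ℤ) - 2 * ((idx s : ℕ) : ℤ))

/-- The operator `p(κ) = Σ_{k ≥ 0} e21^k e12^k (1/k!) Π_{j=0}^{k-1} (κ + e22 - e11 - j)^{-1}`.
The operator `e22 - e11` is diagonal in the chosen basis with eigenvalue `-wt(idx)` on the
basis vector labelled by `idx`, so the (partial) inverses `(κ + e22 - e11 - j)^{-1}` are the
diagonal operators with entries `(κ - wt(idx) - j)⁻¹`.  The sum is finite on `V` since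
`e12` is nilpotent:  `e12^k = 0` for `k > M = Σ_s m_s`. -/
def pOp (κ : ℂ) : Module.End ℂ (TV m) :=
  ∑ k ∈ Finset.range ((∑ s, m s) + 1),
    (e21T m) ^ k * (e12T m) ^ k *
      mulShift (fun idx => ((k.factorial : ℂ))⁻¹ *
        ∏ j ∈ Finset.range k, (κ - ((wt m idx : ℤ) : ℂ) - (j : ℂ))⁻¹) id

/-- The operator `𝒜(κ) = σ ∘ p(κ)`. -/
def Aop (κ : ℂ) : Module.End ℂ (TV m) := sigmaOp m * pOp m κ

/-- `Ω₀^{(s,t)} = e11^{(s)} e11^{(t)} + e22^{(s)} e22^{(t)}`. -/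
def Om0 (s t : Fin n) : Module.End ℂ (TV m) := E11 m s * E11 m t + E22 m s * E22 m t

/-- `Ω₁₂^{(s,t)} = e12^{(s)} e21^{(t)}`. -/
def Om12 (s t : Fin n) : Module.End ℂ (TV m) := E12 m s * E21 m t

/-- `Ω₂₁^{(s,t)} = e21^{(s)} e12^{(t)}`. -/
def Om21 (s t : Fin n) : Module.End ℂ (TV m) := E21 m s * E12 m t

/-- The trigonometric r-matrix `r^{(s,t)}(x) = (Ω₊ x + Ω₋)/(x-1)` acting in the `s`-th and
`t`-th tensor factors, where `Ω₊ = ½Ω₀ + Ω₁₂` and `Ω₋ = ½Ω₀ + Ω₂₁`. -/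
def rOp (s t : Fin n) (x : ℂ) : Module.End ℂ (TV m) :=
  (x - 1)⁻¹ • (x • ((2 : ℂ)⁻¹ • Om0 m s t + Om12 m s t) + ((2 : ℂ)⁻¹ • Om0 m s t + Om21 m s t))

/-- The trigonometric Gaudin operators
`K_s(z,μ) = (μ/2)(e11-e22)^{(s)} + Σ_{t ≠ s} r^{(s,t)}(z_s/z_t)`. -/
def Kop (z : Fin n → ℂ) (μ : ℂ) (s : Fin n) : Module.End ℂ (TV m) :=
  (μ / 2) • (E11 m s - E22 m s) + ∑ t ∈ Finset.univ.erase s, rOp m s t (z s / z t)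

/-- The matrix entry `M₁₁(x) = 2πi Σ_s (1-x/z_s)⁻¹ e11^{(s)} - πi e11`. -/
def M11 (z : Fin n → ℂ) (x : ℂ) : Module.End ℂ (TV m) :=
  (2 * (Real.pi : ℂ) * I) • (∑ s, (1 - x / z s)⁻¹ • E11 m s) - ((Real.pi : ℂ) * I) • e11T m

/-- `M₁₂(x) = 2πi Σ_s (1-x/z_s)⁻¹ e21^{(s)} - 2πi e21`. -/
def M12 (z : Fin n → ℂ) (x : ℂ) : Module.End ℂ (TV m) :=
  (2 * (Real.pi : ℂ) * I) • (∑ s, (1 - x / z s)⁻¹ • E21 m s) -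
    (2 * (Real.pi : ℂ) * I) • e21T m

/-- `M₂₁(x) = 2πi Σ_s (1-x/z_s)⁻¹ e12^{(s)}`. -/
def M21 (z : Fin n → ℂ) (x : ℂ) : Module.End ℂ (TV m) :=
  (2 * (Real.pi : ℂ) * I) • (∑ s, (1 - x / z s)⁻¹ • E12 m s)

/-- `M₂₂(x) = 2πi Σ_s (1-x/z_s)⁻¹ e22^{(s)} - πi e22`. -/
def M22 (z : Fin n → ℂ) (x : ℂ) : Module.End ℂ (TV m) :=
  (2 * (Real.pi : ℂ) * I) • (∑ s, (1 - x / z s)⁻¹ • E22 m s) - ((Real.pi : ℂ) * I) • e22T m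

/-- The derivative `(dM₂₂/dx)(x) = 2πi Σ_s z_s⁻¹ (1-x/z_s)⁻² e22^{(s)}`. -/
def M22d (z : Fin n → ℂ) (x : ℂ) : Module.End ℂ (TV m) :=
  (2 * (Real.pi : ℂ) * I) • (∑ s, ((z s)⁻¹ * ((1 - x / z s)⁻¹) ^ 2) • E22 m s)

/-- The coefficient `D₂(x)` of the universal differential operator
`𝒟 = cdet [[∂_u - πiμ + M₁₁, M₁₂],[M₂₁, ∂_u + πiμ + M₂₂]] = ∂_u² + D₁(x) ∂_u + D₂(x)`
(where `x = e^{-2πiu}`, `∂_u = -2πi x ∂_x`), namely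
`D₂(x) = (-πiμ + M₁₁(x)) ∘ (πiμ + M₂₂(x)) - 2πi x (dM₂₂/dx)(x) - M₂₁(x) ∘ M₁₂(x)`. -/
def D2 (z : Fin n → ℂ) (μ : ℂ) (x : ℂ) : Module.End ℂ (TV m) :=
  (-(((Real.pi : ℂ) * I * μ)) • (1 : Module.End ℂ (TV m)) + M11 m z x) *
      ((((Real.pi : ℂ) * I * μ)) • (1 : Module.End ℂ (TV m)) + M22 m z x)
    - (2 * (Real.pi : ℂ) * I * x) • M22d m z x
    - M21 m z x * M12 m z x

/-- The Bethe ansatz equations for the triple `(z; μ; V[ν])`, `ν = M - 2m'`:  `t` is a tuple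
of pairwise distinct complex numbers, each nonzero and distinct from every `z_s`, with
`(1 - μ + ν/2)/t_i + Σ_{j≠i} 2/(t_i - t_j) - Σ_s m_s/(t_i - z_s) = 0` for all `i`. -/
def BAE (z : Fin n → ℂ) (μ : ℂ) {m' : ℕ} (t : Fin m' → ℂ) : Prop :=
  Function.Injective t ∧ (∀ i, t i ≠ 0) ∧ (∀ i s, t i ≠ z s) ∧
    ∀ i, (1 - μ + ((∑ s, (m s : ℂ)) - 2 * (m' : ℂ)) / 2) / t i
        + (∑ j ∈ Finset.univ.erase i, 2 / (t i - t j))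
        - ∑ s, (m s : ℂ) / (t i - z s) = 0

/-- The partial sum `ℓ_1 + ⋯ + ℓ_{s-1}` (0-based). -/
def pref (ℓv : Idx m) (s : Fin n) : ℕ :=
  ∑ u ∈ Finset.univ.filter (fun u => u < s), (ℓv u : ℕ)

/-- Extension of a tuple `t : Fin m' → ℂ` to a function on `ℕ` (by zero). -/
def extt {m' : ℕ} (t : Fin m' → ℂ) : ℕ → ℂ := fun i => if h : i < m' then t ⟨i, h⟩ else 0

/-- The coordinate `ω_ℓ(t,z) = Σ_{ρ ∈ S_{m'}} Π_{s=1}^n Π_{i=ℓ_1+⋯+ℓ_{s-1}+1}^{ℓ_1+⋯+ℓ_s}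
(t_{ρ(i)} - z_s)⁻¹` of the weight function. -/
def omegaCoeff (z : Fin n → ℂ) {m' : ℕ} (t : Fin m' → ℂ) (ℓv : Idx m) : ℂ :=
  ∑ ρ : Equiv.Perm (Fin m'), ∏ s : Fin n,
    ∏ i ∈ Finset.Ico (pref m ℓv s) (pref m ℓv s + (ℓv s : ℕ)), (extt (t ∘ ρ) i - z s)⁻¹

/-- The Bethe vector (weight function) `ω(t,z) = Σ_{ℓ ∈ C} ω_ℓ(t,z) v_ℓ ∈ V[M - 2m']`. -/
def betheVec (z : Fin n → ℂ) {m' : ℕ} (t : Fin m' → ℂ) : TV m :=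
  fun ℓv => if (∑ s, ((ℓv s : ℕ))) = m' then omegaCoeff m z t ℓv else 0

/-- The eigenvalue `k_s(t,z,μ) = (m_s/2)[(μ - ν/2 + m_s/2) + Σ_{p≠s} m_p z_s/(z_s-z_p)
+ 2 Σ_i z_s/(t_i - z_s)]`, with `ν = M - 2m'`. -/
def kEig (z : Fin n → ℂ) (μ : ℂ) {m' : ℕ} (t : Fin m' → ℂ) (s : Fin n) : ℂ :=
  ((m s : ℂ) / 2) * ((μ - ((∑ u, (m u : ℂ)) - 2 * (m' : ℂ)) / 2 + (m s : ℂ) / 2)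
    + (∑ p ∈ Finset.univ.erase s, (m p : ℂ) * z s / (z s - z p))
    + 2 * ∑ i, z s / (t i - z s))

/-- The scalar eigenvalue function `E₂(x, t, z, μ)` of `D₂(x)` on the Bethe vector, i.e.
the coefficient of the fundamental differential operator `ℰ = ∂_u² + E₂(x)`. -/
def E2fun (z : Fin n → ℂ) (μ : ℂ) {m' : ℕ} (t : Fin m' → ℂ) (x : ℂ) : ℂ :=
  (2 * (Real.pi : ℂ) * I) ^ 2 *
    (-(μ + ((∑ u, (m u : ℂ)) - 2 * (m' : ℂ)) / 2) ^ 2 / 4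
      + ∑ s, (((m s : ℂ) * ((m s : ℂ) + 2) / 4 + kEig m z μ t s) / (1 - x / z s)
          - ((m s : ℂ) * ((m s : ℂ) + 2) / 4) / (1 - x / z s) ^ 2))



section alg
variable {A : Type*} [Ring A] [Algebra ℂ A] (e f h E F H : A)

lemma aL1 (h1 : E * h = h * E - (2:ℂ) • e) (h2 : E * e = e * E) (k : ℕ) :
    E ^ (k+1) * h = h * E ^ (k+1) - (2 * ((k:ℂ)+1)) • (e * E ^ k) := by
  induction k with
  | zero => simp [h1]
  | succ k ih =>
    have : E ^ (k+1+1) * h = E * (E ^ (k+1) * h) := by rw [pow_succ' E (k+1), mul_assoc]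
    rw [this, ih, mul_sub, ← mul_assoc, h1, mul_smul_comm, ← mul_assoc, h2, sub_mul, mul_assoc,
      ← pow_succ', mul_assoc, ← pow_succ', smul_mul_assoc, sub_sub, ← add_smul]
    push_cast
    congr 2
    ring

lemma aL2 (h1 : E * h = h * E - (2:ℂ) • e) (h2 : E * e = e * E) (h3 : E * f = f * E + h) (k : ℕ) :
    E ^ (k+1) * (f * E) = f * E ^ (k+2) + ((k:ℂ)+1) • (h * E ^ (k+1))
      - ((k:ℂ) * (k+1)) • (e * E ^ k) := by
  induction k with
  | zero => simp [← mul_assoc, h3, add_mul, pow_succ]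
  | succ k ih =>
    have : E ^ (k+1+1) * (f * E) = E * (E ^ (k+1) * (f * E)) := by
      rw [pow_succ' E (k+1), mul_assoc]
    rw [this, ih, mul_sub, mul_add, ← mul_assoc, h3, mul_smul_comm, mul_smul_comm, ← mul_assoc, h1,
      ← mul_assoc, h2]
    simp only [add_mul, sub_mul, mul_assoc, ← pow_succ', smul_mul_assoc]
    push_cast
    module

lemma aL3 (h1 : E * F = F * E + H) (h2 : H * E = E * H + (2:ℂ) • E) (k : ℕ) :
    E ^ (k+1) * F = F * E ^ (k+1) + ((k:ℂ)+1) • (E ^ k * (H + (k:ℂ) • 1)) := by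
  induction k with
  | zero => simp [h1]
  | succ k ih =>
    have : E ^ (k+1+1) * F = E * (E ^ (k+1) * F) := by rw [pow_succ' E (k+1), mul_assoc]
    have h3 : ∀ k : ℕ, H * E ^ k = E ^ k * H + (2 * (k:ℂ)) • E ^ k := by
      intro k
      induction k with
      | zero => simp
      | succ k ih =>
        rw [pow_succ, ← mul_assoc, ih, add_mul, mul_assoc, h2, smul_mul_assoc, mul_add, mul_smul_comm, 
          mul_assoc]
        push_cast
        module
    rw [this, ih, mul_add, ← mul_assoc, h1, add_mul, mul_assoc, ← pow_succ', h3, mul_smul_comm, ← mul_assoc,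
      ← pow_succ']
    simp only [mul_add, mul_smul_comm, mul_one]
    push_cast
    module

lemma aHE (h2 : H * E = E * H + (2:ℂ) • E) (k : ℕ) :
    H * E ^ k = E ^ k * H + (2 * (k:ℂ)) • E ^ k := by
  induction k with
  | zero => simp
  | succ k ih =>
    rw [pow_succ, ← mul_assoc, ih, add_mul, mul_assoc, h2, smul_mul_assoc, mul_add, mul_smul_comm, 
      mul_assoc]
    push_cast
    module

lemma aL4 (h1 : h * F = F * h - (2:ℂ) • f) (h2 : f * F = F * f) (k : ℕ) :
    h * F ^ (k+1) = F ^ (k+1) * h - (2 * ((k:ℂ)+1)) • (F ^ k * f) := by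
  induction k with
  | zero => simp [h1]
  | succ k ih =>
    have : h * F ^ (k+1+1) = (h * F ^ (k+1)) * F := by rw [pow_succ F (k+1), mul_assoc]
    rw [this, ih, sub_mul, mul_assoc, h1, smul_mul_assoc, mul_assoc, h2, mul_sub, ← mul_assoc,
      ← pow_succ, ← mul_assoc, ← pow_succ, mul_smul_comm]
    push_cast
    module

lemma aL5 (h1 : h * F = F * h - (2:ℂ) • f) (h2 : f * F = F * f) (h3 : e * F = F * e + h) (k : ℕ) :
    F * e * F ^ (k+1) = F ^ (k+2) * e + ((k:ℂ)+1) • (F ^ (k+1) * h)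
      - ((k:ℂ) * (k+1)) • (F ^ k * f) := by
  induction k with
  | zero => simp [mul_assoc, h3, mul_add, pow_succ]
  | succ k ih =>
    have : F * e * F ^ (k+1+1) = (F * e * F ^ (k+1)) * F := by
      rw [pow_succ F (k+1), ← mul_assoc]
    rw [this, ih, sub_mul, add_mul, mul_assoc, h3, smul_mul_assoc, smul_mul_assoc, mul_assoc, h1,
      mul_assoc, h2]
    simp only [mul_add, mul_sub, ← mul_assoc, ← pow_succ, mul_smul_comm]
    push_cast
    module

lemma aL6 (h1 : E * F = F * E + H) (h2 : H * F = F * H - (2:ℂ) • F) (k : ℕ) :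
    E * F ^ (k+1) = F ^ (k+1) * E + ((k:ℂ)+1) • (F ^ k * (H - (k:ℂ) • 1)) := by
  induction k with
  | zero => simp [h1]
  | succ k ih =>
    have : E * F ^ (k+1+1) = (E * F ^ (k+1)) * F := by rw [pow_succ F (k+1), mul_assoc]
    rw [this, ih, add_mul, mul_assoc, h1, smul_mul_assoc, mul_assoc, sub_mul, h2]
    simp only [mul_add, mul_sub, ← mul_assoc, ← pow_succ, mul_smul_comm, smul_mul_assoc, one_mul, mul_one]
    push_cast
    module

lemma aT (hEh : E * h = h * E - (2:ℂ) • e) (hEe : E * e = e * E) (hEf : E * f = f * E + h)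
    (hEF : E * F = F * E + H) (hHE : H * E = E * H + (2:ℂ) • E)
    (hHe : H * e = e * H + (2:ℂ) • e)
    (hhF : h * F = F * h - (2:ℂ) • f) (hfF : f * F = F * f) (heF : e * F = F * e + h)
    (hHF : H * F = F * H - (2:ℂ) • F) (μ : ℂ) (k : ℕ) :
    F^(k+1) * E^(k+1) * (μ • h + F * e - f * E) - (μ • h - F * e + f * E) * (F^(k+1) * E^(k+1))
    = (2:ℂ) • (F^(k+2) * e * E^(k+1)) - (2:ℂ) • (F^(k+1) * f * E^(k+2))
      + ((k:ℂ)+1) • (F^(k+1) * e * E^k * (H + (2*(k:ℂ)+2-2*μ) • 1))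
      - ((k:ℂ)+1) • (F^k * f * E^(k+1) * (H + (2*(k:ℂ)+2-2*μ) • 1)) := by
  have hEke : ∀ k : ℕ, E^k * e = e * E^k := fun k => (Commute.pow_left (show Commute E e from hEe) k)
  have hfFk : ∀ k : ℕ, f * F^k = F^k * f := fun k => (Commute.pow_right (show Commute f F from hfF) k)
  have A1 : F^(k+1) * E^(k+1) * h = F^(k+1) * h * E^(k+1) - (2 * ((k:ℂ)+1)) • (F^(k+1) * e * E ^ k) := by
    rw [mul_assoc, aL1 e h E hEh hEe, mul_sub, mul_smul_comm, mul_assoc, mul_assoc]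
  have A2 : F^(k+1) * E^(k+1) * (F * e) = F^(k+2) * e * E^(k+1)
      + ((k:ℂ)+1) • (F^(k+1) * e * E^k * (H + ((k:ℂ)+2) • 1)) := by
    have : E^(k+1) * (F * e) = F * e * E^(k+1) + ((k:ℂ)+1) • (e * E^k * (H + ((k:ℂ)+2) • 1)) := by
      rw [← mul_assoc, aL3 E F H hEF hHE, add_mul, mul_assoc, hEke, smul_mul_assoc, mul_assoc, add_mul,
        hHe, smul_mul_assoc, one_mul, mul_assoc F, ← hEke k]
      congr 2
      simp only [mul_add, mul_smul_comm, mul_one, mul_assoc]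
      module
    rw [mul_assoc, this, mul_add, mul_smul_comm, ← mul_assoc, ← mul_assoc, ← pow_succ]
    simp only [mul_assoc]
  have A3 : F^(k+1) * E^(k+1) * (f * E) = F^(k+1) * f * E^(k+2) + ((k:ℂ)+1) • (F^(k+1) * h * E^(k+1))
      - ((k:ℂ) * (k+1)) • (F^(k+1) * e * E^k) := by
    rw [mul_assoc, aL2 e f h E hEh hEe hEf]
    simp only [mul_add, mul_sub, mul_smul_comm, mul_assoc]
  have B1 : h * (F^(k+1) * E^(k+1)) = F^(k+1) * h * E^(k+1) - (2 * ((k:ℂ)+1)) • (F^k * f * E ^ (k+1)) := by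
    rw [← mul_assoc, aL4 f h F hhF hfF, sub_mul, smul_mul_assoc]
  have B2 : F * e * (F^(k+1) * E^(k+1)) = F^(k+2) * e * E^(k+1) + ((k:ℂ)+1) • (F^(k+1) * h * E^(k+1))
      - ((k:ℂ) * (k+1)) • (F^k * f * E^(k+1)) := by
    rw [← mul_assoc, aL5 e f h F hhF hfF heF]
    simp only [add_mul, sub_mul, smul_mul_assoc]
  have B3 : f * E * (F^(k+1) * E^(k+1)) = F^(k+1) * f * E^(k+2)
      + ((k:ℂ)+1) • (F^k * f * E^(k+1) * (H + ((k:ℂ)+2) • 1)) := by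
    rw [← mul_assoc, mul_assoc f, aL6 E F H hEF hHF, mul_add, ← mul_assoc, hfFk, mul_smul_comm, add_mul,
      mul_assoc _ E, ← pow_succ', smul_mul_assoc, ← mul_assoc, hfFk, mul_assoc _ _ (E^(k+1)), sub_mul,
      aHE E H hHE, smul_mul_assoc, one_mul]
    congr 2
    simp only [mul_add, mul_sub, mul_smul_comm, mul_one, mul_assoc]
    push_cast
    module
  rw [mul_sub, mul_add, add_mul, sub_mul, mul_smul_comm, smul_mul_assoc, A1, A2, A3, B1, B2, B3]
  simp only [mul_add, mul_smul_comm, mul_one]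
  module
end alg

lemma aMain {V : Type*} [AddCommGroup V] [Module ℂ V] (e f h E F H : Module.End ℂ V)
    (hEh : E * h = h * E - (2:ℂ) • e) (hEe : E * e = e * E) (hEf : E * f = f * E + h)
    (hEF : E * F = F * E + H) (hHE : H * E = E * H + (2:ℂ) • E)
    (hHe : H * e = e * H + (2:ℂ) • e)
    (hhF : h * F = F * h - (2:ℂ) • f) (hfF : f * F = F * f) (heF : e * F = F * e + h)
    (hHF : H * F = F * H - (2:ℂ) • F) (μ ν l : ℂ) (hl : l = μ - ν / 2 - 1)
    (c : ℕ → ℂ) (hc : ∀ k : ℕ, ((k:ℂ)+1) * (l - k) * c (k+1) = c k) (v : V) (hv : H v = ν • v) (N : ℕ)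
    (h0 : c 0 = 1) :
    (∑ k ∈ Finset.range (N+1), c k • (F^k * E^k * (μ • h + F * e - f * E)
        - (μ • h - F * e + f * E) * (F^k * E^k))) v
      = (c N • ((2:ℂ) • (F^(N+1) * e * E^N) - (2:ℂ) • (F^N * f * E^(N+1)))) v := by
  induction N with
  | zero =>
    simp [h0]
    module
  | succ N ih =>
    rw [Finset.sum_range_succ, LinearMap.add_apply, ih, aT e f h E F H hEh hEe hEf hEF hHE hHe hhF hfF heF hHF,
      ← hc N]
    have hw : (H + (2*(N:ℂ)+2-2*μ) • (1 : Module.End ℂ V)) v = (-(2 * (l - N))) • v := by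
      simp only [LinearMap.add_apply, LinearMap.smul_apply, Module.End.one_apply, hv, hl]
      module
    have hw' : ∀ X : Module.End ℂ V, (X * (H + (2*(N:ℂ)+2-2*μ) • (1 : Module.End ℂ V))) v
        = (-(2 * (l - N))) • X v := by
      intro X
      rw [Module.End.mul_apply, hw, map_smul]
    simp only [LinearMap.add_apply, LinearMap.sub_apply, LinearMap.smul_apply, hw']
    module

section conc

lemma xmul_neg {m : Fin n → ℕ} (a b : Module.End ℂ (TV m)) : a * -b = -(a * b) := mul_neg a b
lemma xneg_mul {m : Fin n → ℕ} (a b : Module.End ℂ (TV m)) : -a * b = -(a * b) := neg_mul a b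
lemma xneg_mul_neg {m : Fin n → ℕ} (a b : Module.End ℂ (TV m)) : -a * -b = a * b := neg_mul_neg a b
lemma xneg_neg {m : Fin n → ℕ} (a : Module.End ℂ (TV m)) : - -a = a := neg_neg a
lemma xsmul_sub {m : Fin n → ℕ} (c : ℂ) (a b : Module.End ℂ (TV m)) : c • (a - b) = c • a - c • b :=
  smul_sub c a b

lemma mulShift_apply {ι : Type*} (c : ι → ℂ) (g : ι → ι) (v : ι → ℂ) (i : ι) :
    mulShift c g v i = c i * v (g i) := rfl

def hOp (s : Fin n) : Module.End ℂ (TV m) := E11 m s - E22 m s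

lemma hOp_apply (s : Fin n) (v : TV m) (i : Idx m) :
    hOp m s v i = ((m s : ℂ) - 2 * ((i s : ℕ) : ℂ)) * v i := by
  simp only [hOp, LinearMap.sub_apply, Pi.sub_apply, E11, E22, mulShift_apply, id]
  ring

lemma E12_apply (s : Fin n) (v : TV m) (i : Idx m) :
    E12 m s v i = ((m s : ℂ) - ((i s : ℕ) : ℂ)) * v (Function.update i s (i s + 1)) := rfl

lemma E21_apply (s : Fin n) (v : TV m) (i : Idx m) :
    E21 m s v i = ((i s : ℕ) : ℂ) * v (Function.update i s (i s - 1)) := rfl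

lemma E11_eq (s : Fin n) : E11 m s = (2:ℂ)⁻¹ • hOp m s := by
  refine LinearMap.ext fun v => funext fun i => ?_
  simp only [LinearMap.smul_apply, Pi.smul_apply, hOp_apply, E11, mulShift_apply, id, smul_eq_mul]
  ring

lemma E22_eq (s : Fin n) : E22 m s = -((2:ℂ)⁻¹ • hOp m s) := by
  refine LinearMap.ext fun v => funext fun i => ?_
  simp only [LinearMap.neg_apply, Pi.neg_apply, LinearMap.smul_apply, Pi.smul_apply, hOp_apply, E22,
    mulShift_apply, id, smul_eq_mul]
  ring

lemma fin_up {N : ℕ} (a : Fin (N+1)) (ha : (a : ℕ) ≠ N) :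
    ((a + 1 : Fin (N+1)) : ℕ) = a + 1 := by
  apply Fin.val_add_one_of_lt
  rw [Fin.lt_def, Fin.val_last]
  omega

lemma fin_down {N : ℕ} (a : Fin (N+1)) (ha : (a : ℕ) ≠ 0) :
    ((a - 1 : Fin (N+1)) : ℕ) = a - 1 := by
  have : a ≠ 0 := fun h => ha (by simp [h])
  exact Fin.val_sub_one_of_ne_zero this

lemma cEE (s t : Fin n) (hst : s ≠ t) : E12 m s * E12 m t = E12 m t * E12 m s := by
  refine LinearMap.ext fun v => funext fun i => ?_
  simp only [Module.End.mul_apply, E12_apply, Function.update_of_ne hst, Function.update_of_ne hst.symm]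
  rw [Function.update_comm hst]
  ring

lemma cFF (s t : Fin n) (hst : s ≠ t) : E21 m s * E21 m t = E21 m t * E21 m s := by
  refine LinearMap.ext fun v => funext fun i => ?_
  simp only [Module.End.mul_apply, E21_apply, Function.update_of_ne hst, Function.update_of_ne hst.symm]
  rw [Function.update_comm hst]
  ring

lemma cEF (s t : Fin n) (hst : s ≠ t) : E12 m s * E21 m t = E21 m t * E12 m s := by
  refine LinearMap.ext fun v => funext fun i => ?_
  simp only [Module.End.mul_apply, E12_apply, E21_apply, Function.update_of_ne hst,
    Function.update_of_ne hst.symm]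
  rw [Function.update_comm hst]
  ring

lemma chE (s t : Fin n) (hst : s ≠ t) : hOp m s * E12 m t = E12 m t * hOp m s := by
  refine LinearMap.ext fun v => funext fun i => ?_
  simp only [Module.End.mul_apply, E12_apply, hOp_apply, Function.update_of_ne hst]
  ring

lemma chF (s t : Fin n) (hst : s ≠ t) : hOp m s * E21 m t = E21 m t * hOp m s := by
  refine LinearMap.ext fun v => funext fun i => ?_
  simp only [Module.End.mul_apply, E21_apply, hOp_apply, Function.update_of_ne hst]
  ring

lemma chh (s t : Fin n) : hOp m s * hOp m t = hOp m t * hOp m s := by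
  refine LinearMap.ext fun v => funext fun i => ?_
  simp only [Module.End.mul_apply, hOp_apply]
  ring

lemma sEF (s : Fin n) : E12 m s * E21 m s - E21 m s * E12 m s = hOp m s := by
  refine LinearMap.ext fun v => funext fun i => ?_
  simp only [Module.End.mul_apply, E12_apply, E21_apply, hOp_apply, Function.update_self,
    Function.update_idem, LinearMap.sub_apply, Pi.sub_apply, add_sub_cancel_right, sub_add_cancel,
    Function.update_eq_self]
  by_cases h1 : (i s : ℕ) = m s
  · by_cases h0 : (i s : ℕ) = 0
    · have h2 : (m s : ℂ) = 0 := by exact_mod_cast (by omega : m s = 0)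
      rw [h0, h2]
      simp
    · rw [fin_down _ h0, h1]
      have : 1 ≤ m s := by omega
      push_cast [this]
      ring
  · rw [fin_up _ h1]
    by_cases h0 : (i s : ℕ) = 0
    · rw [h0]; push_cast; ring
    · rw [fin_down _ h0]
      have : 1 ≤ (i s : ℕ) := by omega
      push_cast [this]
      ring

lemma shE (s : Fin n) : hOp m s * E12 m s - E12 m s * hOp m s = (2:ℂ) • E12 m s := by
  refine LinearMap.ext fun v => funext fun i => ?_
  simp only [Module.End.mul_apply, E12_apply, hOp_apply, Function.update_self, LinearMap.sub_apply,
    Pi.sub_apply, LinearMap.smul_apply, Pi.smul_apply, smul_eq_mul]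
  by_cases h1 : (i s : ℕ) = m s
  · simp [h1]
  · rw [fin_up _ h1]; push_cast; ring

lemma shF (s : Fin n) : hOp m s * E21 m s - E21 m s * hOp m s = -((2:ℂ) • E21 m s) := by
  refine LinearMap.ext fun v => funext fun i => ?_
  simp only [Module.End.mul_apply, E21_apply, hOp_apply, Function.update_self, LinearMap.sub_apply,
    Pi.sub_apply, LinearMap.smul_apply, Pi.smul_apply, smul_eq_mul, LinearMap.neg_apply, Pi.neg_apply]
  by_cases h1 : (i s : ℕ) = 0
  · simp [h1]
  · rw [fin_down _ h1]
    have : 1 ≤ (i s : ℕ) := by omega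
    push_cast [this]; ring

def hT : Module.End ℂ (TV m) := ∑ s, hOp m s

lemma sum_comm_site {A : Type*} [Ring A] (a : Fin n → A) (x : A) (s : Fin n)
    (hc : ∀ u, u ≠ s → a u * x = x * a u) :
    (∑ u, a u) * x = x * (∑ u, a u) + (a s * x - x * a s) := by
  rw [Finset.sum_mul, Finset.mul_sum, ← sub_eq_iff_eq_add', ← Finset.sum_sub_distrib]
  apply Finset.sum_eq_single s
  · intro u _ hu; rw [hc u hu, sub_self]
  · simp

lemma tEh (s : Fin n) : e12T m * hOp m s = hOp m s * e12T m - (2:ℂ) • E12 m s := by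
  rw [e12T, sum_comm_site _ _ s (fun u hu => (chE m s u hu.symm).symm), ← neg_sub, shE, sub_eq_add_neg]

lemma tEe (s : Fin n) : e12T m * E12 m s = E12 m s * e12T m := by
  rw [e12T, sum_comm_site _ _ s (fun u hu => cEE m u s hu), sub_self, add_zero]

lemma tEf (s : Fin n) : e12T m * E21 m s = E21 m s * e12T m + hOp m s := by
  rw [e12T, sum_comm_site _ _ s (fun u hu => cEF m u s hu), sEF]

lemma tFh (s : Fin n) : e21T m * hOp m s = hOp m s * e21T m + (2:ℂ) • E21 m s := by
  rw [e21T, sum_comm_site _ _ s (fun u hu => (chF m s u hu.symm).symm), ← neg_sub, shF, neg_neg]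

lemma tFf (s : Fin n) : e21T m * E21 m s = E21 m s * e21T m := by
  rw [e21T, sum_comm_site _ _ s (fun u hu => cFF m u s hu), sub_self, add_zero]

lemma tFe (s : Fin n) : e21T m * E12 m s = E12 m s * e21T m - hOp m s := by
  rw [e21T, sum_comm_site _ _ s (fun u hu => (cEF m s u hu.symm).symm), ← neg_sub, sEF, sub_eq_add_neg]

lemma tHh (s : Fin n) : hT m * hOp m s = hOp m s * hT m := by
  rw [hT, sum_comm_site _ _ s (fun u _ => chh m u s), sub_self, add_zero]

lemma tHe (s : Fin n) : hT m * E12 m s = E12 m s * hT m + (2:ℂ) • E12 m s := by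
  rw [hT, sum_comm_site _ _ s (fun u hu => chE m u s hu), shE]

lemma tHf (s : Fin n) : hT m * E21 m s = E21 m s * hT m - (2:ℂ) • E21 m s := by
  rw [hT, sum_comm_site _ _ s (fun u hu => chF m u s hu), shF, sub_eq_add_neg]

lemma tEF : e12T m * e21T m = e21T m * e12T m + hT m := by
  rw [e21T, Finset.mul_sum, Finset.sum_mul, hT, ← Finset.sum_add_distrib]
  exact Finset.sum_congr rfl fun s _ => tEf m s

lemma tHE : hT m * e12T m = e12T m * hT m + (2:ℂ) • e12T m := by
  rw [e12T, Finset.mul_sum, Finset.sum_mul, Finset.smul_sum, ← Finset.sum_add_distrib]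
  exact Finset.sum_congr rfl fun s _ => tHe m s

lemma tHF : hT m * e21T m = e21T m * hT m - (2:ℂ) • e21T m := by
  rw [e21T, Finset.mul_sum, Finset.sum_mul, Finset.smul_sum, ← Finset.sum_sub_distrib]
  exact Finset.sum_congr rfl fun s _ => tHf m s

/-- The Casimir tensor. -/
def Cas (s t : Fin n) : Module.End ℂ (TV m) :=
  (2:ℂ)⁻¹ • (hOp m s * hOp m t) + E12 m s * E21 m t + E21 m s * E12 m t

lemma casE (s t : Fin n) : Commute (e12T m) (Cas m s t) := by
  show e12T m * Cas m s t = Cas m s t * e12T m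
  simp only [Cas, mul_add, add_mul, mul_smul_comm, smul_mul_assoc]
  rw [← mul_assoc, tEh, sub_mul, mul_assoc (hOp m s), tEh, ← mul_assoc, tEe, mul_assoc (E12 m s), tEf,
    ← mul_assoc (e12T m) (E21 m s), tEf, add_mul, mul_assoc (E21 m s), tEe]
  simp only [mul_add, mul_sub, mul_smul_comm, smul_mul_assoc, mul_assoc]
  module

lemma casF (s t : Fin n) : Commute (e21T m) (Cas m s t) := by
  show e21T m * Cas m s t = Cas m s t * e21T m
  simp only [Cas, mul_add, add_mul, mul_smul_comm, smul_mul_assoc]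
  rw [← mul_assoc, tFh, add_mul, mul_assoc (hOp m s), tFh, ← mul_assoc, tFe, sub_mul,
    mul_assoc (E12 m s), tFf,
    ← mul_assoc (e21T m) (E21 m s), tFf, mul_assoc (E21 m s), tFe]
  simp only [mul_add, mul_sub, mul_smul_comm, smul_mul_assoc, mul_assoc]
  module

lemma casH (s t : Fin n) : Commute (hT m) (Cas m s t) := by
  show hT m * Cas m s t = Cas m s t * hT m
  simp only [Cas, mul_add, add_mul, mul_smul_comm, smul_mul_assoc]
  rw [← mul_assoc, tHh, mul_assoc (hOp m s), tHh, ← mul_assoc, ← mul_assoc (hT m), tHe, add_mul,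
    mul_assoc (E12 m s), tHf,
    ← mul_assoc (hT m) (E21 m s), tHf, sub_mul, mul_assoc (E21 m s), tHe]
  simp only [mul_add, mul_sub, mul_smul_comm, smul_mul_assoc, mul_assoc]
  module

def Dop (s : Fin n) : Module.End ℂ (TV m) := e21T m * E12 m s - E21 m s * e12T m

def Sop (z : Fin n → ℂ) (s : Fin n) : Module.End ℂ (TV m) :=
  ∑ t ∈ Finset.univ.erase s, ((2:ℂ)⁻¹ * ((z s / z t + 1) / (z s / z t - 1))) • Cas m s t

lemma Dop_eq (s : Fin n) :
    ∑ t ∈ Finset.univ.erase s, (E12 m s * E21 m t - E21 m s * E12 m t) = Dop m s := by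
  have h1 := Finset.add_sum_erase Finset.univ (fun t => E12 m s * E21 m t - E21 m s * E12 m t)
    (Finset.mem_univ s)
  rw [← eq_sub_iff_add_eq'] at h1
  rw [h1]
  simp only [sEF, Finset.sum_sub_distrib, ← Finset.mul_sum]
  rw [Dop, tFe, e12T, e21T]
  abel

lemma rOp_eq (s t : Fin n) (x : ℂ) (hx : x - 1 ≠ 0) :
    rOp m s t x = ((2:ℂ)⁻¹ * ((x + 1) / (x - 1))) • Cas m s t
      + (2:ℂ)⁻¹ • (E12 m s * E21 m t - E21 m s * E12 m t) := by
  simp only [rOp, Om0, Om12, Om21, E11_eq, E22_eq, Cas, xneg_mul_neg, smul_mul_assoc, mul_smul_comm]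
  match_scalars <;> field_simp <;> ring

lemma Kop_eq (z : Fin n → ℂ) (hz0 : ∀ s, z s ≠ 0) (hz : Function.Injective z) (μ : ℂ) (s : Fin n) :
    Kop m z μ s = (2:ℂ)⁻¹ • (μ • hOp m s + Dop m s) + Sop m z s := by
  have h1 : ∑ t ∈ Finset.univ.erase s, rOp m s t (z s / z t) = Sop m z s + (2:ℂ)⁻¹ • Dop m s := by
    rw [← Dop_eq, Sop, Finset.smul_sum, ← Finset.sum_add_distrib]
    refine Finset.sum_congr rfl fun t ht => rOp_eq m s t _ ?_
    have : t ≠ s := Finset.ne_of_mem_erase ht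
    intro h
    rw [sub_eq_zero, div_eq_one_iff_eq (hz0 t)] at h
    exact this (hz h.symm)
  rw [Kop, h1, ← hOp]
  module

lemma hσ (s : Fin n) : hOp m s * sigmaOp m = -(sigmaOp m * hOp m s) := by
  refine LinearMap.ext fun v => funext fun i => ?_
  simp only [Module.End.mul_apply, hOp_apply, LinearMap.neg_apply, Pi.neg_apply, sigmaOp,
    mulShift_apply, Fin.val_rev]
  have : (i s : ℕ) ≤ m s := by omega
  push_cast [Nat.add_sub_add_right, this]
  ring

lemma eσ (s : Fin n) : E12 m s * sigmaOp m = -(sigmaOp m * E21 m s) := by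
  refine LinearMap.ext fun v => funext fun i => ?_
  simp only [Module.End.mul_apply, E12_apply, E21_apply, LinearMap.neg_apply, Pi.neg_apply, sigmaOp,
    mulShift_apply, Fin.val_rev, Nat.add_sub_add_right]
  have hle : (i s : ℕ) ≤ m s := by omega
  by_cases h1 : (i s : ℕ) = m s
  · simp [h1]
  have h2 : (fun t => (Function.update i s (i s + 1) t).rev)
      = Function.update (fun t => (i t).rev) s ((i s).rev - 1) := by
    funext t
    by_cases ht : t = s
    · subst ht
      simp only [Function.update_self]
      apply Fin.ext
      rw [fin_down _ (by rw [Fin.val_rev]; omega), Fin.val_rev, Fin.val_rev, fin_up _ h1]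
      omega
    · simp [Function.update_of_ne ht]
  have h3 : ∏ t, (-1:ℂ) ^ (m t - (Function.update i s (i s + 1) t : ℕ))
      = - ∏ t, (-1:ℂ) ^ (m t - (i t : ℕ)) := by
    rw [← Finset.mul_prod_erase _ _ (Finset.mem_univ s),
      ← Finset.mul_prod_erase _ (fun t => (-1:ℂ) ^ (m t - (i t : ℕ))) (Finset.mem_univ s),
      Function.update_self, fin_up _ h1,
      show m s - (i s : ℕ) = (m s - ((i s : ℕ) + 1)) + 1 by omega, pow_succ]
    rw [Finset.prod_congr rfl (g := fun t => (-1:ℂ) ^ (m t - (i t : ℕ)))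
      (fun t ht => by rw [Function.update_of_ne (Finset.ne_of_mem_erase ht)])]
    ring
  rw [h2, h3]
  push_cast [hle]
  ring

lemma fσ (s : Fin n) : E21 m s * sigmaOp m = -(sigmaOp m * E12 m s) := by
  refine LinearMap.ext fun v => funext fun i => ?_
  simp only [Module.End.mul_apply, E12_apply, E21_apply, LinearMap.neg_apply, Pi.neg_apply, sigmaOp,
    mulShift_apply, Fin.val_rev, Nat.add_sub_add_right]
  have hle : (i s : ℕ) ≤ m s := by omega
  by_cases h1 : (i s : ℕ) = 0
  · simp [h1]
  have h2 : (fun t => (Function.update i s (i s - 1) t).rev)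
      = Function.update (fun t => (i t).rev) s ((i s).rev + 1) := by
    funext t
    by_cases ht : t = s
    · subst ht
      simp only [Function.update_self]
      apply Fin.ext
      rw [fin_up _ (by rw [Fin.val_rev]; omega), Fin.val_rev, Fin.val_rev, fin_down _ h1]
      omega
    · simp [Function.update_of_ne ht]
  have h3 : ∏ t, (-1:ℂ) ^ (m t - (Function.update i s (i s - 1) t : ℕ))
      = - ∏ t, (-1:ℂ) ^ (m t - (i t : ℕ)) := by
    rw [← Finset.mul_prod_erase _ _ (Finset.mem_univ s),
      ← Finset.mul_prod_erase _ (fun t => (-1:ℂ) ^ (m t - (i t : ℕ))) (Finset.mem_univ s),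
      Function.update_self, fin_down _ h1,
      show m s - ((i s : ℕ) - 1) = (m s - (i s : ℕ)) + 1 by omega, pow_succ]
    rw [Finset.prod_congr rfl (g := fun t => (-1:ℂ) ^ (m t - (i t : ℕ)))
      (fun t ht => by rw [Function.update_of_ne (Finset.ne_of_mem_erase ht)])]
    ring
  rw [h2, h3]
  push_cast [hle]
  ring

lemma Eσ : e12T m * sigmaOp m = -(sigmaOp m * e21T m) := by
  rw [e12T, e21T, Finset.sum_mul, Finset.mul_sum, ← Finset.sum_neg_distrib]
  exact Finset.sum_congr rfl fun s _ => eσ m s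

lemma Fσ : e21T m * sigmaOp m = -(sigmaOp m * e12T m) := by
  rw [e12T, e21T, Finset.sum_mul, Finset.mul_sum, ← Finset.sum_neg_distrib]
  exact Finset.sum_congr rfl fun s _ => fσ m s

lemma Dσ (s : Fin n) : Dop m s * sigmaOp m = -(sigmaOp m * Dop m s) := by
  simp only [Dop, sub_mul, mul_assoc, eσ, Eσ, xmul_neg]
  rw [← mul_assoc, ← mul_assoc, Fσ, fσ, xneg_mul, xneg_mul, xneg_neg, xneg_neg, mul_assoc, mul_assoc,
    ← mul_sub, tEf, tFe, ← xmul_neg]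
  congr 1
  abel

lemma casσ (s t : Fin n) : Cas m s t * sigmaOp m = sigmaOp m * Cas m s t := by
  simp only [Cas, add_mul, mul_add, smul_mul_assoc, mul_smul_comm, mul_assoc, hσ, eσ, fσ, xmul_neg]
  simp only [← mul_assoc, hσ, eσ, fσ, xneg_mul, xneg_neg]
  abel

lemma Sσ (z : Fin n → ℂ) (s : Fin n) : Sop m z s * sigmaOp m = sigmaOp m * Sop m z s := by
  rw [Sop, Finset.sum_mul, Finset.mul_sum]
  refine Finset.sum_congr rfl fun t _ => ?_
  rw [smul_mul_assoc, mul_smul_comm, casσ]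

lemma SE (z : Fin n → ℂ) (s : Fin n) : Commute (e12T m) (Sop m z s) :=
  Commute.sum_right _ _ _ fun t _ => (casE m s t).smul_right _

lemma SF (z : Fin n → ℂ) (s : Fin n) : Commute (e21T m) (Sop m z s) :=
  Commute.sum_right _ _ _ fun t _ => (casF m s t).smul_right _

lemma SH (z : Fin n → ℂ) (s : Fin n) : Commute (hT m) (Sop m z s) :=
  Commute.sum_right _ _ _ fun t _ => (casH m s t).smul_right _

lemma DH (s : Fin n) : Commute (hT m) (Dop m s) := by
  show hT m * Dop m s = Dop m s * hT m
  simp only [Dop, mul_sub, sub_mul]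
  rw [← mul_assoc, tHF, ← mul_assoc, tHf, sub_mul, sub_mul, mul_assoc, tHe,
    mul_assoc _ (hT m), tHE]
  simp only [mul_add, mul_smul_comm, smul_mul_assoc, mul_assoc]
  module

lemma Epow_zero (k : ℕ) (v : TV m) (i : Idx m) (hk : ∑ s, m s < k + ∑ s, (i s : ℕ)) :
    (e12T m ^ k) v i = 0 := by
  induction k generalizing i with
  | zero =>
    exfalso
    have : ∑ s, (i s : ℕ) ≤ ∑ s, m s := Finset.sum_le_sum fun s _ => by omega
    omega
  | succ k ih =>
    rw [pow_succ', Module.End.mul_apply, e12T, LinearMap.sum_apply, Finset.sum_apply]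
    refine Finset.sum_eq_zero fun s _ => ?_
    rw [E12_apply]
    by_cases h1 : (i s : ℕ) = m s
    · simp [h1]
    · rw [← e12T, ih, mul_zero]
      rw [← Finset.add_sum_erase _ (fun t => (i t : ℕ)) (Finset.mem_univ s)] at hk
      rw [← Finset.add_sum_erase _ (fun t => (Function.update i s (i s + 1) t : ℕ)) (Finset.mem_univ s),
        Function.update_self, fin_up _ h1]
      have h5 : ∑ t ∈ Finset.univ.erase s, (Function.update i s (i s + 1) t : ℕ)
          = ∑ t ∈ Finset.univ.erase s, (i t : ℕ) := Finset.sum_congr rfl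
        (fun t ht => by rw [Function.update_of_ne (Finset.ne_of_mem_erase ht)])
      rw [h5]
      omega

lemma Fpow_zero (k : ℕ) (v : TV m) (i : Idx m) (hk : ∑ s, (i s : ℕ) < k) :
    (e21T m ^ k) v i = 0 := by
  induction k generalizing i with
  | zero => omega
  | succ k ih =>
    rw [pow_succ', Module.End.mul_apply, e21T, LinearMap.sum_apply, Finset.sum_apply]
    refine Finset.sum_eq_zero fun s _ => ?_
    rw [E21_apply]
    by_cases h1 : (i s : ℕ) = 0
    · simp [h1]
    · rw [← e21T, ih, mul_zero]
      rw [← Finset.add_sum_erase _ (fun t => (i t : ℕ)) (Finset.mem_univ s)] at hk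
      rw [← Finset.add_sum_erase _ (fun t => (Function.update i s (i s - 1) t : ℕ)) (Finset.mem_univ s),
        Function.update_self, fin_down _ h1]
      rw [Finset.sum_congr rfl (g := fun t => (i t : ℕ))
        (fun t ht => by rw [Function.update_of_ne (Finset.ne_of_mem_erase ht)])]
      omega

lemma E_nil : e12T m ^ ((∑ s, m s) + 1) = 0 := by
  refine LinearMap.ext fun v => funext fun i => ?_
  exact Epow_zero m _ v i (by omega)

lemma F_nil : e21T m ^ ((∑ s, m s) + 1) = 0 := by
  refine LinearMap.ext fun v => funext fun i => ?_
  refine Fpow_zero m _ v i ?_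
  have : ∑ s, (i s : ℕ) ≤ ∑ s, m s := Finset.sum_le_sum fun s _ => by omega
  omega

def cK (l : ℂ) (k : ℕ) : ℂ := ((k.factorial : ℂ))⁻¹ * ∏ j ∈ Finset.range k, (l - (j : ℂ))⁻¹

lemma hT_apply (v : TV m) (i : Idx m) : hT m v i = ((wt m i : ℤ) : ℂ) * v i := by
  rw [hT, LinearMap.sum_apply, Finset.sum_apply, wt]
  simp only [hOp_apply]
  push_cast
  rw [Finset.sum_mul]

lemma pOp_wt (κ : ℂ) (ν : ℤ) (v : TV m) (hv : hT m v = (ν : ℂ) • v) :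
    pOp m κ v = (∑ k ∈ Finset.range ((∑ s, m s) + 1), cK (κ - ν) k • (e21T m ^ k * e12T m ^ k)) v := by
  rw [pOp, LinearMap.sum_apply, LinearMap.sum_apply]
  refine Finset.sum_congr rfl fun k _ => ?_
  rw [Module.End.mul_apply, LinearMap.smul_apply, ← map_smul]
  congr 1
  funext i
  rw [mulShift_apply, Pi.smul_apply, smul_eq_mul, id]
  by_cases h0 : v i = 0
  · simp [h0]
  · have h1 := congrFun hv i
    rw [hT_apply, Pi.smul_apply, smul_eq_mul] at h1
    rw [mul_right_cancel₀ h0 h1, cK]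

end conc

/-- Lemma 4.4 of the paper.  For `μ ∉ M/2 + ℤ`, `ν ≡ M (mod 2)`, and
pairwise distinct nonzero `z_1,…,z_n`, for every `s` and every `v ∈ V[ν]`:
`𝒜(μ + ν/2 - 1) K_s(z,μ) v = K_s(z,-μ) 𝒜(μ + ν/2 - 1) v`. -/
theorem statement3
    (n : ℕ) (hn : 1 < n) (m : Fin n → ℕ) (hm : ∀ s, 0 < m s)
    (M : ℕ) (hM : M = ∑ s, m s)
    (μ : ℂ) (hμ : ∀ k : ℤ, μ ≠ (M : ℂ) / 2 + (k : ℂ))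
    (ν : ℤ) (hν : (2 : ℤ) ∣ ((M : ℤ) - ν))
    (z : Fin n → ℂ) (hz0 : ∀ s, z s ≠ 0) (hz : Function.Injective z) :
    ∀ s : Fin n, ∀ v : TV m, inWt m ν v →
      Aop m (μ + (ν : ℂ) / 2 - 1) (Kop m z μ s v)
        = Kop m z (-μ) s (Aop m (μ + (ν : ℂ) / 2 - 1) v) := by
  intro s v hv
  have hvH : hT m v = (ν : ℂ) • v := by
    rw [← hv, hT, e11T, e22T, ← Finset.sum_sub_distrib]; rfl
  set κ : ℂ := μ + (ν : ℂ) / 2 - 1 with hκ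
  have hKH : hT m (Kop m z μ s v) = (ν : ℂ) • Kop m z μ s v := by
    have hcm : Commute (hT m) (Kop m z μ s) := by
      rw [Kop_eq m z hz0 hz]
      exact ((((show Commute _ _ from tHh m s).smul_right μ).add_right (DH m s)).smul_right _).add_right
        (SH m z s)
    rw [← Module.End.mul_apply, hcm.eq, Module.End.mul_apply, hvH, map_smul]
  set l : ℂ := κ - ν with hl
  have hl0 : ∀ k : ℕ, l - k ≠ 0 := by
    intro k h
    obtain ⟨j, hj⟩ := hν
    have hj' : (M : ℂ) - ν = 2 * j := by exact_mod_cast hj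
    apply hμ (1 + k - j)
    push_cast
    rw [hl, hκ] at h
    linear_combination h - hj' / 2
  have hc : ∀ k : ℕ, ((k:ℂ)+1) * (l - k) * cK l (k+1) = cK l k := by
    intro k
    have h1 : ((k.factorial : ℕ) : ℂ) ≠ 0 := by exact_mod_cast k.factorial_ne_zero
    have h2 : (k:ℂ) + 1 ≠ 0 := by exact_mod_cast Nat.succ_ne_zero k
    have h3 := hl0 k
    rw [cK, cK, Finset.prod_range_succ, Nat.factorial_succ]
    push_cast
    field_simp
  have main := aMain (E12 m s) (E21 m s) (hOp m s) (e12T m) (e21T m) (hT m)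
    (tEh m s) (tEe m s) (tEf m s) (tEF m) (tHE m) (tHe m s)
    (by rw [tFh]; abel) (tFf m s).symm (by rw [tFe]; abel) (tHF m) μ ν l (by rw [hl, hκ]; ring)
    (cK l) hc v hvH (∑ s, m s) (by simp [cK])
  rw [E_nil, F_nil] at main
  simp only [zero_mul, mul_zero, smul_zero, sub_self, LinearMap.zero_apply] at main
  set P := ∑ k ∈ Finset.range ((∑ s, m s) + 1), cK l k • (e21T m ^ k * e12T m ^ k) with hP
  have main2 : (P * (μ • hOp m s + Dop m s) - (μ • hOp m s - Dop m s) * P) v = 0 := by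
    rw [← main]
    congr 1
    rw [hP, Finset.sum_mul, Finset.mul_sum, ← Finset.sum_sub_distrib]
    refine Finset.sum_congr rfl fun k _ => ?_
    rw [smul_mul_assoc, mul_smul_comm, ← xsmul_sub, Dop]
    congr 3
    · abel
    · abel
  have hPS : Commute P (Sop m z s) := by
    rw [hP]
    exact Commute.sum_left _ _ _ fun k _ =>
      (((SF m z s).pow_left k).mul_left ((SE m z s).pow_left k)).smul_left _
  have hσK : Kop m z (-μ) s * sigmaOp m
      = sigmaOp m * ((2:ℂ)⁻¹ • (μ • hOp m s - Dop m s) + Sop m z s) := by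
    rw [Kop_eq m z hz0 hz, add_mul, Sσ, smul_mul_assoc, add_mul, Dσ, smul_mul_assoc, hσ, mul_add,
      mul_smul_comm, mul_sub, mul_smul_comm]
    module
  rw [Aop, Module.End.mul_apply, Module.End.mul_apply, pOp_wt m κ ν _ hKH, pOp_wt m κ ν v hvH, ← hP,
    ← Module.End.mul_apply (Kop m z (-μ) s), hσK, Module.End.mul_apply (sigmaOp m)]
  congr 1
  rw [← Module.End.mul_apply, ← Module.End.mul_apply, ← sub_eq_zero, ← LinearMap.sub_apply,
    Kop_eq m z hz0 hz, mul_add, add_mul, hPS.eq, add_sub_add_right_eq_sub, mul_smul_comm,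
    smul_mul_assoc, ← xsmul_sub, LinearMap.smul_apply, main2, smul_zero]


end
end Paper
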